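/- First variation of the action of a solution reduces to a boundary term (equation (10)). Let Ω ⊂ ℝⁿ be a closed axis-aligned box (so the divergence theorem applies on Ω), and suppose Φ satisfies the Euler–Lagrange equations E_B(x) = 0 for all x ∈ Ω and all B. Then for every smooth variation δΦ_B : ℝⁿ → ℝ (with no boundary condition imposed), d/dε|_{ε=0} ∫_Ω L(x, jet(Φ+εδΦ)(x)) dⁿx = ∫_{∂Ω} n_λ(x) Σ_{B=1}^{f} Σ_{Z=0}^{N−1} (∂_{ν₁}⋯∂_{ν_Z} δΦ_B)(x) · K^{Bλν₁…ν_Z}(x) ds(x), where n is the outward unit normal on ∂Ω and ds the surface measure; i.e. the first variation of the action among real movements is determined entirely by the boundary data. -/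

import Mathlib

open scoped BigOperators

/-- Index of a jet variable: derivative order `X ≤ N`, field index `B`,
and a multi-index of coordinate directions of length `X`. -/
abbrev JIdx (n f N : ℕ) : Type := Σ X : Fin (N + 1), Fin f × (Fin (X : ℕ) → Fin n)

/-- The (finite-dimensional) space of jet variables `q = (q^X_{B,λ₁…λ_X})`. -/
abbrev Jet (n f N : ℕ) : Type := JIdx n f N → ℝ

/-- Partial derivative in the `i`-th coordinate direction. -/
noncomputable def pd {n : ℕ} (i : Fin n) (F : (Fin n → ℝ) → ℝ) (x : Fin n → ℝ) : ℝ :=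
  fderiv ℝ F x (Pi.single i 1)

/-- Iterated partial derivative along a list of coordinate directions. -/
noncomputable def pds {n : ℕ} : List (Fin n) → ((Fin n → ℝ) → ℝ) → (Fin n → ℝ) → ℝ
  | [], F => F
  | i :: l, F => pd i (pds l F)

/-- The `N`-jet of the family of fields `Φ` at the point `x`:
the collection `(Φ_B(x), ∂Φ_B(x), …, ∂^N Φ_B(x))`. -/
noncomputable def jet {n f N : ℕ} (Φ : Fin f → (Fin n → ℝ) → ℝ) (x : Fin n → ℝ) :
    Jet n f N :=
  fun idx => pds (List.ofFn idx.2.2) (Φ idx.2.1) x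

/-- `∂L/∂q_idx` evaluated along the jet of `Φ`. -/
noncomputable def dLdq {n f N : ℕ} (L : (Fin n → ℝ) → Jet n f N → ℝ)
    (Φ : Fin f → (Fin n → ℝ) → ℝ) (idx : JIdx n f N) (x : Fin n → ℝ) : ℝ :=
  fderiv ℝ (L x) (jet Φ x) (Pi.single idx 1)

/-- The jet with the multi-index of the order-`X` variables permuted by `σ`. -/
def permJet {n f N : ℕ} (X : Fin (N + 1)) (σ : Equiv.Perm (Fin (X : ℕ)))
    (q : Jet n f N) : Jet n f N :=
  fun idx =>
    if h : idx.1 = X then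
      q ⟨idx.1, idx.2.1, fun i =>
        idx.2.2 (Fin.cast (congrArg Fin.val h).symm (σ (Fin.cast (congrArg Fin.val h) i)))⟩
    else q idx

/-- The Euler–Lagrange expression `E_B(x)`. -/
noncomputable def EulerLagrange {n f N : ℕ} (L : (Fin n → ℝ) → Jet n f N → ℝ)
    (Φ : Fin f → (Fin n → ℝ) → ℝ) (B : Fin f) (x : Fin n → ℝ) : ℝ :=
  ∑ X : Fin (N + 1), ∑ lam : Fin (X : ℕ) → Fin n,
    (-1 : ℝ) ^ (X : ℕ) * pds (List.ofFn lam) (dLdq L Φ ⟨X, B, lam⟩) x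

/-- The coefficients `K^{Bλν₁…ν_Z}(x)` of the boundary/divergence term. -/
noncomputable def Kcur {n f N : ℕ} (L : (Fin n → ℝ) → Jet n f N → ℝ)
    (Φ : Fin f → (Fin n → ℝ) → ℝ) (B : Fin f) (lam : Fin n) (Z : Fin N)
    (nu : Fin (Z : ℕ) → Fin n) (x : Fin n → ℝ) : ℝ :=
  ∑ Y : Fin (N - (Z : ℕ)), ∑ mu : Fin (Y : ℕ) → Fin n,
    (-1 : ℝ) ^ (Y : ℕ) *
      pds (List.ofFn mu)
        (dLdq L Φ
          ⟨⟨1 + (Y : ℕ) + (Z : ℕ), by have h1 := Y.isLt; have h2 := Z.isLt; omega⟩, B,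
            Fin.append (Fin.append (fun _ : Fin 1 => lam) mu) nu⟩) x


section Helpers

open MeasureTheory

lemma pd_contDiff {n : ℕ} (i : Fin n) {F : (Fin n → ℝ) → ℝ} (hF : ContDiff ℝ (⊤ : ℕ∞) F) :
    ContDiff ℝ (⊤ : ℕ∞) (pd i F) := by
  have h : ContDiff ℝ (⊤ : ℕ∞) (fderiv ℝ F) := hF.fderiv_right (by simp)
  exact h.clm_apply contDiff_const

lemma pds_contDiff {n : ℕ} (l : List (Fin n)) {F : (Fin n → ℝ) → ℝ}
    (hF : ContDiff ℝ (⊤ : ℕ∞) F) : ContDiff ℝ (⊤ : ℕ∞) (pds l F) := by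
  induction l with
  | nil => exact hF
  | cons i l ih => exact pd_contDiff i ih

lemma smooth_diff {n : ℕ} {F : (Fin n → ℝ) → ℝ} (hF : ContDiff ℝ (⊤ : ℕ∞) F) :
    Differentiable ℝ F := hF.differentiable (by simp)

lemma pd_comm {n : ℕ} (i j : Fin n) {F : (Fin n → ℝ) → ℝ} (hF : ContDiff ℝ (⊤ : ℕ∞) F) :
    pd i (pd j F) = pd j (pd i F) := by
  have h : ContDiff ℝ (⊤ : ℕ∞) (fderiv ℝ F) := hF.fderiv_right (by simp)
  have hd : Differentiable ℝ (fderiv ℝ F) := h.differentiable (by simp)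
  have key : ∀ (i j : Fin n) x, pd i (pd j F) x
      = fderiv ℝ (fderiv ℝ F) x (Pi.single i 1) (Pi.single j 1) := by
    intro i j x
    have h1 : HasFDerivAt (pd j F) _ x :=
      (hd x).hasFDerivAt.clm_apply (hasFDerivAt_const (Pi.single j (1:ℝ) : Fin n → ℝ) x)
    unfold pd at h1 ⊢
    rw [h1.fderiv]
    simp
  funext x
  rw [key, key]
  have hs : IsSymmSndFDerivAt ℝ F x :=
    hF.contDiffAt.isSymmSndFDerivAt (by
      rw [minSmoothness_of_isRCLikeNormedField]; exact WithTop.coe_le_coe.2 (le_top : (2 : ℕ∞) ≤ ⊤))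
  exact hs _ _

lemma pds_perm {n : ℕ} {l l' : List (Fin n)} (h : l.Perm l') {F : (Fin n → ℝ) → ℝ}
    (hF : ContDiff ℝ (⊤ : ℕ∞) F) : pds l F = pds l' F := by
  induction h with
  | nil => rfl
  | cons i _ ih => simp only [pds, ih]
  | swap i j l => exact pd_comm _ _ (pds_contDiff l hF)
  | trans _ _ ih1 ih2 => exact ih1.trans ih2

lemma pds_add_smul {n : ℕ} (l : List (Fin n)) {F G : (Fin n → ℝ) → ℝ} (ε : ℝ)
    (hF : ContDiff ℝ (⊤ : ℕ∞) F) (hG : ContDiff ℝ (⊤ : ℕ∞) G) :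
    pds l (fun x => F x + ε * G x) = fun x => pds l F x + ε * pds l G x := by
  induction l with
  | nil => rfl
  | cons i l ih =>
    simp only [pds, ih]
    funext x
    have h1 := (smooth_diff (pds_contDiff l hF) x).hasFDerivAt.add
      ((smooth_diff (pds_contDiff l hG) x).hasFDerivAt.const_mul ε)
    unfold pd
    have h2 : HasFDerivAt (fun x => pds l F x + ε * pds l G x) _ x := h1
    rw [h2.fderiv]
    simp

lemma jet_contDiff {n f N : ℕ} {Φ : Fin f → (Fin n → ℝ) → ℝ}
    (hΦ : ∀ B, ContDiff ℝ (⊤ : ℕ∞) (Φ B)) :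
    ContDiff ℝ (⊤ : ℕ∞) (fun x => (jet Φ x : Jet n f N)) := by
  rw [contDiff_pi]
  intro idx
  exact pds_contDiff _ (hΦ _)

lemma dLdq_contDiff {n f N : ℕ} {L : (Fin n → ℝ) → Jet n f N → ℝ}
    (hL : ContDiff ℝ (⊤ : ℕ∞) (fun p : (Fin n → ℝ) × Jet n f N => L p.1 p.2))
    {Φ : Fin f → (Fin n → ℝ) → ℝ}
    (hΦ : ∀ B, ContDiff ℝ (⊤ : ℕ∞) (Φ B)) (idx : JIdx n f N) :
    ContDiff ℝ (⊤ : ℕ∞) (dLdq L Φ idx) :=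
  ContDiff.fderiv_apply (f := L) hL (jet_contDiff hΦ) contDiff_const (by simp)

/-- `permJet` as a continuous linear map. -/
noncomputable def permJetL {n f N : ℕ} (X : Fin (N + 1)) (σ : Equiv.Perm (Fin (X : ℕ))) :
    Jet n f N →L[ℝ] Jet n f N :=
  LinearMap.toContinuousLinearMap
    { toFun := permJet X σ
      map_add' := by
        intro p q; funext idx; simp only [permJet, Pi.add_apply]; split_ifs <;> rfl
      map_smul' := by
        intro c q; funext idx; simp only [permJet, Pi.smul_apply]; split_ifs <;> rfl }

lemma permJetL_apply {n f N : ℕ} (X : Fin (N + 1)) (σ : Equiv.Perm (Fin (X : ℕ)))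
    (q : Jet n f N) : permJetL X σ q = permJet X σ q := rfl

lemma permJet_jet {n f N : ℕ} {Φ : Fin f → (Fin n → ℝ) → ℝ}
    (hΦ : ∀ B, ContDiff ℝ (⊤ : ℕ∞) (Φ B)) (X : Fin (N + 1))
    (σ : Equiv.Perm (Fin (X : ℕ))) (x : Fin n → ℝ) :
    permJet X σ (jet Φ x : Jet n f N) = jet Φ x := by
  funext ⟨Y, B, v⟩
  unfold permJet
  by_cases h : Y = X
  · subst h
    simp only [dite_true, jet, Fin.cast_eq_self]
    exact congrFun (pds_perm (Equiv.Perm.ofFn_comp_perm σ v) (hΦ B)) x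
  · simp [h]

lemma permJet_single {n f N : ℕ} (X : Fin (N + 1))
    (σ : Equiv.Perm (Fin (X : ℕ))) (B : Fin f) (v : Fin (X : ℕ) → Fin n) :
    permJet X σ (Pi.single (⟨X, B, v ∘ σ⟩ : JIdx n f N) (1 : ℝ))
      = Pi.single (⟨X, B, v⟩ : JIdx n f N) (1 : ℝ) := by
  funext ⟨Y, B', w⟩
  unfold permJet
  by_cases h : Y = X
  · subst h
    simp only [dite_true, Fin.cast_eq_self, Pi.single_apply]
    have : ((⟨Y, B', fun i => w (σ i)⟩ : JIdx n f N) = ⟨Y, B, v ∘ σ⟩) ↔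
        ((⟨Y, B', w⟩ : JIdx n f N) = ⟨Y, B, v⟩) := by
      simp only [Sigma.mk.injEq, heq_eq_eq, Prod.mk.injEq, true_and]
      refine and_congr_right fun _ => ?_
      exact σ.surjective.injective_comp_right.eq_iff (a := w) (b := v)
    simp only [this]
  · have : (⟨Y, B', w⟩ : JIdx n f N) ≠ ⟨X, B, v⟩ := by
      intro h'; exact h (congrArg Sigma.fst h')
    have h2 : (⟨Y, B', w⟩ : JIdx n f N) ≠ ⟨X, B, v ∘ σ⟩ := by
      intro h'; exact h (congrArg Sigma.fst h')
    simp [h, this, h2]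

lemma dLdq_perm {n f N : ℕ} {L : (Fin n → ℝ) → Jet n f N → ℝ}
    (hL : ContDiff ℝ (⊤ : ℕ∞) (fun p : (Fin n → ℝ) × Jet n f N => L p.1 p.2))
    (hLsymm : ∀ (x : Fin n → ℝ) (q : Jet n f N) (X : Fin (N + 1))
      (σ : Equiv.Perm (Fin (X : ℕ))), L x (permJet X σ q) = L x q)
    {Φ : Fin f → (Fin n → ℝ) → ℝ}
    (hΦ : ∀ B, ContDiff ℝ (⊤ : ℕ∞) (Φ B)) (X : Fin (N + 1))
    (σ : Equiv.Perm (Fin (X : ℕ))) (B : Fin f) (v : Fin (X : ℕ) → Fin n) :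
    dLdq L Φ ⟨X, B, v ∘ σ⟩ = dLdq L Φ ⟨X, B, v⟩ := by
  funext x
  have hLx : Differentiable ℝ (L x) := by
    have : ContDiff ℝ (⊤ : ℕ∞) (L x) := hL.comp (contDiff_const.prodMk contDiff_id)
    exact this.differentiable (by simp)
  have h1 : L x = L x ∘ (permJetL X σ) := by
    funext q; exact (hLsymm x q X σ).symm
  unfold dLdq
  conv_lhs => rw [h1]
  rw [fderiv_comp _ (hLx _) (permJetL X σ).differentiableAt]
  rw [ContinuousLinearMap.fderiv, ContinuousLinearMap.comp_apply, permJetL_apply, permJetL_apply,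
    permJet_jet hΦ, permJet_single]

lemma exists_perm_of_ofFn_perm {n k : ℕ} (v w : Fin k → Fin n)
    (h : (List.ofFn v).Perm (List.ofFn w)) : ∃ σ : Equiv.Perm (Fin k), w = v ∘ σ := by
  have h1 : (List.ofFn (v ∘ Tuple.sort v)).Perm (List.ofFn (w ∘ Tuple.sort w)) :=
    (Equiv.Perm.ofFn_comp_perm _ v).trans (h.trans (Equiv.Perm.ofFn_comp_perm _ w).symm)
  have h2 := h1.eq_of_pairwise' (Tuple.monotone_sort v).sortedLE_ofFn.pairwise
    (Tuple.monotone_sort w).sortedLE_ofFn.pairwise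
  have h3 := List.ofFn_injective h2
  refine ⟨(Tuple.sort w).symm.trans (Tuple.sort v), ?_⟩
  funext i
  have := congrFun h3 ((Tuple.sort w).symm i)
  simpa using this.symm

/-- `∂L/∂q` along the jet, indexed by lists. -/
noncomputable def Fl {n f N : ℕ} (L : (Fin n → ℝ) → Jet n f N → ℝ)
    (Φ : Fin f → (Fin n → ℝ) → ℝ) (B : Fin f) (l : List (Fin n)) : (Fin n → ℝ) → ℝ :=
  if h : l.length < N + 1 then dLdq L Φ ⟨⟨l.length, h⟩, B, l.get⟩ else fun _ => 0

lemma jidx_eq {n f N : ℕ} (X : Fin (N + 1)) (B : Fin f) (v : Fin (X : ℕ) → Fin n)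
    (k : ℕ) (hk : k = (X : ℕ)) (hk' : k < N + 1) (w : Fin k → Fin n)
    (hw : ∀ i, w i = v (Fin.cast hk i)) :
    (⟨⟨k, hk'⟩, B, w⟩ : JIdx n f N) = ⟨X, B, v⟩ := by
  subst hk
  have : w = v := funext hw
  subst this
  rfl

lemma Fl_ofFn {n f N : ℕ} (L : (Fin n → ℝ) → Jet n f N → ℝ)
    (Φ : Fin f → (Fin n → ℝ) → ℝ) (B : Fin f) (X : Fin (N + 1)) (v : Fin (X : ℕ) → Fin n) :
    dLdq L Φ ⟨X, B, v⟩ = Fl L Φ B (List.ofFn v) := by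
  have h : (List.ofFn v).length < N + 1 := by rw [List.length_ofFn]; exact X.isLt
  unfold Fl
  rw [dif_pos h]
  congr 1
  symm
  apply jidx_eq _ _ _ _ (by simp)
  intro i
  simp
  rfl

lemma Fl_contDiff {n f N : ℕ} {L : (Fin n → ℝ) → Jet n f N → ℝ}
    (hL : ContDiff ℝ (⊤ : ℕ∞) (fun p : (Fin n → ℝ) × Jet n f N => L p.1 p.2))
    {Φ : Fin f → (Fin n → ℝ) → ℝ}
    (hΦ : ∀ B, ContDiff ℝ (⊤ : ℕ∞) (Φ B)) (B : Fin f) (l : List (Fin n)) :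
    ContDiff ℝ (⊤ : ℕ∞) (Fl L Φ B l) := by
  unfold Fl
  split_ifs
  · exact dLdq_contDiff hL hΦ _
  · exact contDiff_const

lemma Fl_perm {n f N : ℕ} {L : (Fin n → ℝ) → Jet n f N → ℝ}
    (hL : ContDiff ℝ (⊤ : ℕ∞) (fun p : (Fin n → ℝ) × Jet n f N => L p.1 p.2))
    (hLsymm : ∀ (x : Fin n → ℝ) (q : Jet n f N) (X : Fin (N + 1))
      (σ : Equiv.Perm (Fin (X : ℕ))), L x (permJet X σ q) = L x q)
    {Φ : Fin f → (Fin n → ℝ) → ℝ}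
    (hΦ : ∀ B, ContDiff ℝ (⊤ : ℕ∞) (Φ B)) (B : Fin f) (l l' : List (Fin n))
    (h : l.Perm l') : Fl L Φ B l = Fl L Φ B l' := by
  by_cases hl : l.length < N + 1
  · have key : ∀ k (hk : k < N + 1) (v w : Fin k → Fin n), (List.ofFn v).Perm (List.ofFn w) →
        Fl L Φ B (List.ofFn v) = Fl L Φ B (List.ofFn w) := by
      intro k hk v w hvw
      obtain ⟨σ, rfl⟩ := exists_perm_of_ofFn_perm v w hvw
      have h1 := dLdq_perm hL hLsymm hΦ ⟨k, hk⟩ σ B v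
      have h2 := Fl_ofFn L Φ B ⟨k, hk⟩ v
      have h3 := Fl_ofFn L Φ B ⟨k, hk⟩ (v ∘ σ)
      exact h2.symm.trans (h1.symm.trans h3)
    have e1 : l = List.ofFn l.get := (List.ofFn_get l).symm
    have e2 : l' = List.ofFn (fun i : Fin l.length => l'.get (Fin.cast h.length_eq i)) := by
      apply List.ext_get
      · simp [h.length_eq]
      · intro i h1 h2; simp
    have h3 := key l.length hl l.get (fun i : Fin l.length => l'.get (Fin.cast h.length_eq i))
      (by rw [← e1, ← e2]; exact h)
    rwa [← e1, ← e2] at h3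
  · unfold Fl
    rw [dif_neg hl, dif_neg (by rw [← h.length_eq]; exact hl)]

/-- Sum over all multi-indices of length `k`. -/
noncomputable def SS (n k : ℕ) (g : List (Fin n) → ℝ) : ℝ := ∑ v : Fin k → Fin n, g (List.ofFn v)

lemma SS_succ (n k : ℕ) (g : List (Fin n) → ℝ) :
    SS n (k + 1) g = ∑ i, SS n k (fun l => g (i :: l)) := by
  unfold SS
  rw [← (Fin.consEquiv (fun _ => Fin n)).sum_comp, Fintype.sum_prod_type]
  simp [Fin.consEquiv]

lemma tri_sum (a : ℕ → ℕ → ℝ) (N : ℕ) :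
    ∑ Z ∈ Finset.range N, ∑ Y ∈ Finset.range (N - Z), (a Y (Z + 1) - a (Y + 1) Z)
      = ∑ X ∈ Finset.range (N + 1), a 0 X - ∑ X ∈ Finset.range (N + 1), a X 0 := by
  induction N with
  | zero => simp
  | succ N ih =>
    rw [Finset.sum_range_succ _ (N + 1), Finset.sum_range_succ _ (N + 1)]
    have h1 : ∀ Z ∈ Finset.range (N + 1),
        ∑ Y ∈ Finset.range (N + 1 - Z), (a Y (Z + 1) - a (Y + 1) Z)
        = ∑ Y ∈ Finset.range (N - Z), (a Y (Z + 1) - a (Y + 1) Z)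
          + ((fun z => a (N + 1 - z) z) (Z + 1) - (fun z => a (N + 1 - z) z) Z) := by
      intro Z hZ
      have hZ' : Z ≤ N := by simpa [Nat.lt_succ_iff] using hZ
      rw [Nat.succ_sub hZ', Nat.succ_eq_add_one, Finset.sum_range_succ]
      simp only [Nat.add_sub_add_right, Nat.succ_sub hZ', Nat.succ_eq_add_one]
    rw [Finset.sum_congr rfl h1, Finset.sum_add_distrib, Finset.sum_range_sub (fun z => a (N + 1 - z) z),
      Finset.sum_range_succ, ih]
    simp
    ring

lemma pd_mul {n : ℕ} (i : Fin n) {F G : (Fin n → ℝ) → ℝ}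
    (hF : Differentiable ℝ F) (hG : Differentiable ℝ G) (x : Fin n → ℝ) :
    pd i (fun x => F x * G x) x = pd i F x * G x + F x * pd i G x := by
  have h : HasFDerivAt (fun x => F x * G x) _ x := (hF x).hasFDerivAt.mul (hG x).hasFDerivAt
  unfold pd
  rw [h.fderiv]
  simp
  ring

lemma pd_sum {n : ℕ} (i : Fin n) {ι : Type*} (s : Finset ι) {F : ι → (Fin n → ℝ) → ℝ}
    (hF : ∀ j, Differentiable ℝ (F j)) (x : Fin n → ℝ) :
    pd i (fun x => ∑ j ∈ s, F j x) x = ∑ j ∈ s, pd i (F j) x := by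
  unfold pd
  rw [fderiv_fun_sum (fun j _ => hF j x)]
  simp

lemma pd_const_mul {n : ℕ} (i : Fin n) (c : ℝ) {F : (Fin n → ℝ) → ℝ}
    (hF : Differentiable ℝ F) (x : Fin n → ℝ) :
    pd i (fun x => c * F x) x = c * pd i F x := by
  unfold pd
  rw [fderiv_const_mul (hF x)]
  simp

/-- Mixed terms of the iterated integration by parts. -/
noncomputable def AA {n : ℕ} (F : List (Fin n) → (Fin n → ℝ) → ℝ) (u : (Fin n → ℝ) → ℝ)
    (x : Fin n → ℝ) (Y Z : ℕ) : ℝ :=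
  SS n Y fun μ => SS n Z fun ν => pds μ (F (μ ++ ν)) x * pds ν u x

/-- Pieces of the current. -/
noncomputable def JJ {n : ℕ} (F : List (Fin n) → (Fin n → ℝ) → ℝ) (u : (Fin n → ℝ) → ℝ)
    (i : Fin n) (Y Z : ℕ) (x : Fin n → ℝ) : ℝ :=
  SS n Y fun μ => SS n Z fun ν => pds μ (F (i :: (μ ++ ν))) x * pds ν u x

lemma JJ_contDiff {n : ℕ} {F : List (Fin n) → (Fin n → ℝ) → ℝ} {u : (Fin n → ℝ) → ℝ}
    (hF : ∀ l, ContDiff ℝ (⊤ : ℕ∞) (F l)) (hu : ContDiff ℝ (⊤ : ℕ∞) u)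
    (i : Fin n) (Y Z : ℕ) : ContDiff ℝ (⊤ : ℕ∞) (JJ F u i Y Z) := by
  unfold JJ SS
  refine ContDiff.sum fun μ _ => ContDiff.sum fun ν _ => ?_
  exact (pds_contDiff _ (hF _)).mul (pds_contDiff _ hu)

lemma div_JJ {n : ℕ} {F : List (Fin n) → (Fin n → ℝ) → ℝ} {u : (Fin n → ℝ) → ℝ}
    (hF : ∀ l, ContDiff ℝ (⊤ : ℕ∞) (F l)) (hu : ContDiff ℝ (⊤ : ℕ∞) u)
    (hFp : ∀ l l', l.Perm l' → F l = F l') (Y Z : ℕ) (x : Fin n → ℝ) :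
    ∑ i, pd i (JJ F u i Y Z) x = AA F u x (Y + 1) Z + AA F u x Y (Z + 1) := by
  have hsm : ∀ (i : Fin n) (μ ν : List (Fin n)), Differentiable ℝ
      (fun x => pds μ (F (i :: (μ ++ ν))) x * pds ν u x) := fun i μ ν =>
    smooth_diff ((pds_contDiff _ (hF _)).mul (pds_contDiff _ hu))
  have h1 : ∀ i, pd i (JJ F u i Y Z) x =
      (SS n Y fun μ => SS n Z fun ν => pds (i :: μ) (F (i :: (μ ++ ν))) x * pds ν u x)
      + (SS n Y fun μ => SS n Z fun ν => pds μ (F (i :: (μ ++ ν))) x * pds (i :: ν) u x) := by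
    intro i
    unfold JJ SS
    rw [pd_sum i Finset.univ (F := fun (v : Fin Y → Fin n) x => ∑ w : Fin Z → Fin n,
      pds (List.ofFn v) (F (i :: (List.ofFn v ++ List.ofFn w))) x * pds (List.ofFn w) u x)
      (fun v => Differentiable.fun_sum fun w _ => hsm i _ _)]
    rw [← Finset.sum_add_distrib]
    refine Finset.sum_congr rfl fun v _ => ?_
    rw [pd_sum i Finset.univ (fun w => hsm i _ _), ← Finset.sum_add_distrib]
    refine Finset.sum_congr rfl fun w _ => ?_
    rw [pd_mul i (smooth_diff (pds_contDiff _ (hF _))) (smooth_diff (pds_contDiff _ hu))]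
    rfl
  rw [Finset.sum_congr rfl (fun i _ => h1 i), Finset.sum_add_distrib]
  congr 1
  · unfold AA
    rw [SS_succ]
    rfl
  · unfold AA
    simp only [SS_succ]
    simp only [SS]
    rw [Finset.sum_comm]
    refine Finset.sum_congr rfl fun v _ => Finset.sum_congr rfl fun i _ =>
      Finset.sum_congr rfl fun w _ => ?_
    rw [hFp _ _ (List.perm_middle (a := i) (l₁ := List.ofFn v) (l₂ := List.ofFn w)).symm]

/-- The current. -/
noncomputable def cur {n : ℕ} (N : ℕ) (F : List (Fin n) → (Fin n → ℝ) → ℝ) (u : (Fin n → ℝ) → ℝ)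
    (i : Fin n) (x : Fin n → ℝ) : ℝ :=
  ∑ Z ∈ Finset.range N, ∑ Y ∈ Finset.range (N - Z), (-1 : ℝ) ^ Y * JJ F u i Y Z x

lemma cur_contDiff {n : ℕ} (N : ℕ) {F : List (Fin n) → (Fin n → ℝ) → ℝ} {u : (Fin n → ℝ) → ℝ}
    (hF : ∀ l, ContDiff ℝ (⊤ : ℕ∞) (F l)) (hu : ContDiff ℝ (⊤ : ℕ∞) u)
    (i : Fin n) : ContDiff ℝ (⊤ : ℕ∞) (cur N F u i) := by
  unfold cur
  exact ContDiff.sum fun Z _ => ContDiff.sum fun Y _ =>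
    contDiff_const.mul (JJ_contDiff hF hu i Y Z)

lemma div_cur {n : ℕ} (N : ℕ) {F : List (Fin n) → (Fin n → ℝ) → ℝ} {u : (Fin n → ℝ) → ℝ}
    (hF : ∀ l, ContDiff ℝ (⊤ : ℕ∞) (F l)) (hu : ContDiff ℝ (⊤ : ℕ∞) u)
    (hFp : ∀ l l', l.Perm l' → F l = F l') (x : Fin n → ℝ) :
    ∑ i, pd i (cur N F u i) x = ∑ X ∈ Finset.range (N + 1), AA F u x 0 X
      - ∑ X ∈ Finset.range (N + 1), (-1 : ℝ) ^ X * AA F u x X 0 := by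
  have h1 : ∀ i, pd i (cur N F u i) x = ∑ Z ∈ Finset.range N, ∑ Y ∈ Finset.range (N - Z),
      (-1 : ℝ) ^ Y * pd i (JJ F u i Y Z) x := by
    intro i
    have hd : ∀ Y Z, Differentiable ℝ (fun x => (-1 : ℝ) ^ Y * JJ F u i Y Z x) := fun Y Z =>
      smooth_diff (contDiff_const.mul (JJ_contDiff hF hu i Y Z))
    unfold cur
    rw [pd_sum i (Finset.range N) (F := fun Z x => ∑ Y ∈ Finset.range (N - Z),
      (-1 : ℝ) ^ Y * JJ F u i Y Z x) (fun Z => Differentiable.fun_sum fun Y _ => hd Y Z)]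
    refine Finset.sum_congr rfl fun Z _ => ?_
    rw [pd_sum i _ (fun Y => hd Y Z)]
    refine Finset.sum_congr rfl fun Y _ => ?_
    rw [pd_const_mul i _ (smooth_diff (JJ_contDiff hF hu i Y Z))]
  have h2 := tri_sum (fun Y Z => (-1 : ℝ) ^ Y * AA F u x Y Z) N
  simp only [pow_zero, one_mul] at h2
  rw [← h2, Finset.sum_congr rfl (fun i _ => h1 i), Finset.sum_comm]
  refine Finset.sum_congr rfl fun Z _ => ?_
  rw [Finset.sum_comm]
  refine Finset.sum_congr rfl fun Y _ => ?_
  rw [← Finset.mul_sum, div_JJ hF hu hFp]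
  ring

lemma cur_eq {n f N : ℕ} (L : (Fin n → ℝ) → Jet n f N → ℝ)
    (Φ : Fin f → (Fin n → ℝ) → ℝ) (B : Fin f) (u : (Fin n → ℝ) → ℝ) (i : Fin n)
    (x : Fin n → ℝ) :
    ∑ Z : Fin N, ∑ nu : Fin (Z : ℕ) → Fin n, pds (List.ofFn nu) u x * Kcur L Φ B i Z nu x
      = cur N (Fl L Φ B) u i x := by
  unfold cur
  rw [← Fin.sum_univ_eq_sum_range
    (fun Z => ∑ Y ∈ Finset.range (N - Z), (-1 : ℝ) ^ Y * JJ (Fl L Φ B) u i Y Z x)]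
  refine Finset.sum_congr rfl fun Z _ => ?_
  rw [← Fin.sum_univ_eq_sum_range (fun Y => (-1 : ℝ) ^ Y * JJ (Fl L Φ B) u i Y Z x)]
  unfold Kcur JJ SS
  simp only [Finset.mul_sum]
  rw [Finset.sum_comm]
  refine Finset.sum_congr rfl fun Y _ => ?_
  rw [Finset.sum_comm]
  refine Finset.sum_congr rfl fun mu _ => Finset.sum_congr rfl fun nu _ => ?_
  rw [Fl_ofFn]
  have : List.ofFn (Fin.append (Fin.append (fun _ : Fin 1 => i) mu) nu)
      = i :: (List.ofFn mu ++ List.ofFn nu) := by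
    rw [List.ofFn_fin_append, List.ofFn_fin_append]
    simp
  rw [this]
  ring

lemma EL_eq {n f N : ℕ} (L : (Fin n → ℝ) → Jet n f N → ℝ)
    (Φ : Fin f → (Fin n → ℝ) → ℝ) (B : Fin f) (u : (Fin n → ℝ) → ℝ)
    (x : Fin n → ℝ) :
    ∑ X ∈ Finset.range (N + 1), (-1 : ℝ) ^ X * AA (Fl L Φ B) u x X 0
      = EulerLagrange L Φ B x * u x := by
  rw [← Fin.sum_univ_eq_sum_range (fun X => (-1 : ℝ) ^ X * AA (Fl L Φ B) u x X 0)]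
  unfold EulerLagrange
  rw [Finset.sum_mul]
  refine Finset.sum_congr rfl fun X _ => ?_
  unfold AA SS
  rw [Finset.mul_sum, Finset.sum_mul]
  refine Finset.sum_congr rfl fun v _ => ?_
  rw [Fl_ofFn]
  simp [pds, mul_assoc]

lemma var_eq {n f N : ℕ} (L : (Fin n → ℝ) → Jet n f N → ℝ)
    (Φ δΦ : Fin f → (Fin n → ℝ) → ℝ) (x : Fin n → ℝ) :
    fderiv ℝ (L x) (jet Φ x) (jet δΦ x)
      = ∑ B, ∑ X ∈ Finset.range (N + 1), AA (Fl L Φ B) (δΦ B) x 0 X := by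
  have h := LinearMap.pi_apply_eq_sum_univ
    (fderiv ℝ (L x) (jet Φ x)).toLinearMap (jet δΦ x)
  have h0 : fderiv ℝ (L x) (jet Φ x) (jet δΦ x)
      = ∑ idx : JIdx n f N, jet δΦ x idx * dLdq L Φ idx x := by
    refine h.trans (Finset.sum_congr rfl fun idx _ => ?_)
    rw [smul_eq_mul]
    unfold dLdq
    have e : (fun j => if idx = j then (1 : ℝ) else 0) = Pi.single idx 1 := by
      funext j
      simp [Pi.single_apply, eq_comm]
    rw [e]
    rfl
  rw [h0, Fintype.sum_sigma, Finset.sum_comm]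
  rw [← Fin.sum_univ_eq_sum_range
    (fun X => ∑ B, AA (Fl L Φ B) (δΦ B) x 0 X)]
  refine Finset.sum_congr rfl fun X _ => ?_
  rw [Fintype.sum_prod_type]
  refine Finset.sum_congr rfl fun B _ => ?_
  unfold AA SS
  simp only [Fl_ofFn, jet]
  simp [pds, mul_comm]

end Helpers

/-- equation (10) of the paper: if `Φ` satisfies the Euler–Lagrange
equations on the closed axis-aligned box `Ω = Icc a b ⊂ ℝⁿ` (`n = d+1 ≥ 2`), then the
first variation of the action along any smooth variation `δΦ` (with no boundary
condition imposed) reduces to the boundary term, written as the sum of the outward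
fluxes through the `2(d+1)` faces of the box. -/
theorem first_variation_of_solution_is_boundary_term {d f N : ℕ}
    (hd : 1 ≤ d) (hf : 1 ≤ f) (hN : 1 ≤ N)
    (L : (Fin (d + 1) → ℝ) → Jet (d + 1) f N → ℝ)
    (hL : ContDiff ℝ (⊤ : ℕ∞) (fun p : (Fin (d + 1) → ℝ) × Jet (d + 1) f N => L p.1 p.2))
    (hLsymm : ∀ (x : Fin (d + 1) → ℝ) (q : Jet (d + 1) f N) (X : Fin (N + 1))
      (σ : Equiv.Perm (Fin (X : ℕ))), L x (permJet X σ q) = L x q)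
    (Φ δΦ : Fin f → (Fin (d + 1) → ℝ) → ℝ)
    (hΦ : ∀ B, ContDiff ℝ (⊤ : ℕ∞) (Φ B)) (hδΦ : ∀ B, ContDiff ℝ (⊤ : ℕ∞) (δΦ B))
    (a b : Fin (d + 1) → ℝ) (hab : a ≤ b)
    (hEL : ∀ (B : Fin f), ∀ x ∈ Set.Icc a b, EulerLagrange L Φ B x = 0) :
    deriv (fun ε : ℝ =>
        ∫ x in Set.Icc a b, L x (jet (fun B x' => Φ B x' + ε * δΦ B x') x)) 0
      = ∑ i : Fin (d + 1),
          ((∫ x' in Set.Icc (a ∘ i.succAbove) (b ∘ i.succAbove),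
              ∑ B : Fin f, ∑ Z : Fin N, ∑ nu : Fin (Z : ℕ) → Fin (d + 1),
                pds (List.ofFn nu) (δΦ B) (i.insertNth (b i) x')
                  * Kcur L Φ B i Z nu (i.insertNth (b i) x'))
           - (∫ x' in Set.Icc (a ∘ i.succAbove) (b ∘ i.succAbove),
              ∑ B : Fin f, ∑ Z : Fin N, ∑ nu : Fin (Z : ℕ) → Fin (d + 1),
                pds (List.ofFn nu) (δΦ B) (i.insertNth (a i) x')
                  * Kcur L Φ B i Z nu (i.insertNth (a i) x'))) := by
  have hjet : ∀ (ε : ℝ) x, (jet (fun B x' => Φ B x' + ε * δΦ B x') x : Jet (d + 1) f N)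
      = jet Φ x + ε • jet δΦ x := by
    intro ε x
    funext idx
    simp only [jet, pds_add_smul _ ε (hΦ _) (hδΦ _), Pi.add_apply, Pi.smul_apply, smul_eq_mul]
  simp only [hjet]
  have hjΦ : ContDiff ℝ (⊤ : ℕ∞) (fun x => (jet Φ x : Jet (d + 1) f N)) := jet_contDiff hΦ
  have hjδ : ContDiff ℝ (⊤ : ℕ∞) (fun x => (jet δΦ x : Jet (d + 1) f N)) := jet_contDiff hδΦ
  have hjoint : ContDiff ℝ (⊤ : ℕ∞) (fun p : ℝ × (Fin (d + 1) → ℝ) =>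
      (jet Φ p.2 + p.1 • jet δΦ p.2 : Jet (d + 1) f N)) :=
    (hjΦ.comp contDiff_snd).add (contDiff_fst.smul (hjδ.comp contDiff_snd))
  have hLx : ∀ x, Differentiable ℝ (L x) := by
    intro x
    have : ContDiff ℝ (⊤ : ℕ∞) (L x) := hL.comp (contDiff_const.prodMk contDiff_id)
    exact this.differentiable (by simp)
  -- the ε-derivative of the integrand
  have hF'c : ContDiff ℝ (⊤ : ℕ∞) (fun p : ℝ × (Fin (d + 1) → ℝ) =>
      fderiv ℝ (L p.2) (jet Φ p.2 + p.1 • jet δΦ p.2) (jet δΦ p.2)) := by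
    refine ContDiff.fderiv_apply (f := fun p : ℝ × (Fin (d + 1) → ℝ) => L p.2)
      (m := (⊤ : ℕ∞)) ?_ hjoint (hjδ.comp contDiff_snd) (by simp)
    exact hL.comp ((contDiff_snd.comp contDiff_fst).prodMk contDiff_snd)
  have hFc : ∀ ε : ℝ, Continuous (fun x => L x (jet Φ x + ε • jet δΦ x)) := by
    intro ε
    have h1 : ContDiff ℝ (⊤ : ℕ∞) (fun x => L x (jet Φ x + ε • jet δΦ x)) :=
      hL.comp (contDiff_id.prodMk (hjΦ.add (hjδ.const_smul ε)))
    exact h1.continuous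
  have hK : IsCompact (Set.Icc a b) := isCompact_Icc
  obtain ⟨C, hC⟩ := ((isCompact_Icc (a := (-1 : ℝ)) (b := 1)).prod hK).exists_bound_of_continuousOn
    hF'c.continuous.continuousOn
  have hderiv := (hasDerivAt_integral_of_dominated_loc_of_deriv_le
    (μ := MeasureTheory.volume.restrict (Set.Icc a b)) (x₀ := (0 : ℝ))
    (s := Set.Icc (-1 : ℝ) 1) (bound := fun _ => C)
    (F := fun ε x => L x (jet Φ x + ε • jet δΦ x))
    (F' := fun ε x => fderiv ℝ (L x) (jet Φ x + ε • jet δΦ x) (jet δΦ x))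
    (Icc_mem_nhds (by norm_num) (by norm_num))
    (Filter.Eventually.of_forall fun ε => (hFc ε).aestronglyMeasurable)
    ((hFc 0).continuousOn.integrableOn_compact hK)
    (hF'c.continuous.comp (Continuous.prodMk continuous_const continuous_id)).aestronglyMeasurable
    (by
      filter_upwards [MeasureTheory.ae_restrict_mem measurableSet_Icc] with x hx ε hε
      exact hC (ε, x) ⟨hε, hx⟩)
    (MeasureTheory.integrableOn_const hK.measure_lt_top.ne)
    (Filter.Eventually.of_forall fun x ε _ => by
      have h1 : HasDerivAt (fun ε : ℝ => (jet Φ x + ε • jet δΦ x : Jet (d + 1) f N))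
          (jet δΦ x) ε := by
        simpa using ((hasDerivAt_id ε).smul_const (jet δΦ x : Jet (d + 1) f N)).const_add
          (jet Φ x : Jet (d + 1) f N)
      exact ((hLx x _).hasFDerivAt.comp_hasDerivAt ε h1))).2
  rw [hderiv.deriv]
  -- rewrite the currents
  simp only [cur_eq]
  have hcs : ∀ i, ContDiff ℝ (⊤ : ℕ∞) (fun x => ∑ B, cur N (Fl L Φ B) (δΦ B) i x) := fun i =>
    ContDiff.sum fun B _ => cur_contDiff N (Fl_contDiff hL hΦ B) (hδΦ B) i
  have hdiv := MeasureTheory.integral_divergence_of_hasFDerivAt_off_countable' a b hab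
    (fun i x => ∑ B, cur N (Fl L Φ B) (δΦ B) i x)
    (fun i x => fderiv ℝ (fun x => ∑ B, cur N (Fl L Φ B) (δΦ B) i x) x) ∅ Set.countable_empty
    (fun i => (hcs i).continuous.continuousOn)
    (fun x _ i => (smooth_diff (hcs i) x).hasFDerivAt)
    ((continuous_finsetSum _ fun i _ =>
      (pd_contDiff i (hcs i)).continuous).continuousOn.integrableOn_compact hK)
  rw [← hdiv]
  refine MeasureTheory.setIntegral_congr_fun measurableSet_Icc fun x hx => ?_
  simp only [zero_smul, add_zero]
  rw [var_eq]
  have h3 : ∀ i, fderiv ℝ (fun x => ∑ B, cur N (Fl L Φ B) (δΦ B) i x) x (Pi.single i 1)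
      = ∑ B, pd i (cur N (Fl L Φ B) (δΦ B) i) x := fun i =>
    pd_sum i Finset.univ
      (fun B => smooth_diff (cur_contDiff N (Fl_contDiff hL hΦ B) (hδΦ B) i)) x
  refine Eq.trans ?_ (Finset.sum_congr rfl (fun i _ => (h3 i).symm))
  refine Eq.trans ?_ Finset.sum_comm
  refine Finset.sum_congr rfl fun B _ => ?_
  rw [div_cur N (Fl_contDiff hL hΦ B) (hδΦ B) (Fl_perm hL hLsymm hΦ B), EL_eq, hEL B x hx]
  simp
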